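/- For every fixed c with 0 < c < 1 there exists a constant C > 0 such that for all sufficiently large x, |T_c(x) − T'_c(x)| ≤ C·x·log log x/(log x)². -/

import Mathlib

open Real Finset

attribute [local instance] Classical.propDecidable

/-- `Pplus n` is the largest prime factor of `n`, with the convention `Pplus 1 = 1`. -/
noncomputable def Pplus (n : ℕ) : ℕ := if n = 1 then 1 else n.primeFactors.sup id

/-- `T c x = #{p ≤ x : p prime, P⁺(p-1) ≥ p^c}`. -/
noncomputable def T (c x : ℝ) : ℕ :=
  ((Finset.range (⌊x⌋₊ + 1)).filter
    (fun p : ℕ => p.Prime ∧ (p : ℝ) ^ c ≤ (Pplus (p - 1) : ℝ))).card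

/-- `T' c x = #{p ≤ x : p prime, P⁺(p-1) ≥ x^c}`. -/
noncomputable def T' (c x : ℝ) : ℕ :=
  ((Finset.range (⌊x⌋₊ + 1)).filter
    (fun p : ℕ => p.Prime ∧ x ^ c ≤ (Pplus (p - 1) : ℝ))).card

/-!
Since `p ^ c ≤ x ^ c`, the difference `T c x - T' c x` counts the primes `p ≤ x` for which
`q = P⁺(p - 1)` satisfies `p ^ c ≤ q < x ^ c`. Put `y = x / log x`. By Chebyshev there are only
`O(x / (log x) ^ 2)` such primes with `p ≤ y`. For the others `q` lies in the short range
`(y ^ c, x ^ c)` and `p ≡ 1 [MOD q]`. The Selberg sieve of level `y ^ δ` bounds the number of these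
`p` for a given `q` by `O(x / (q log x))` (Brun–Titchmarsh), with an error that stays negligible
when summed over the at most `x ^ c` values of `q` once `c + 2 * δ < 1`. Finally, Chebyshev's bound
on dyadic intervals gives `∑ 1 / q = O(log log x / log x)` over the primes of that range.
-/

open scoped ArithmeticFunction.Moebius

theorem sum_divisors_filter_dvd_moebius {l : ℕ} (hl : Squarefree l) (k : ℕ) :
    ∑ d ∈ l.divisors with k ∣ d, μ d = if k = l then μ l else 0 := by
  by_cases hk : k ∣ l
  swap
  · rw [filter_false_of_mem fun d hd hkd ↦ hk (hkd.trans (Nat.dvd_of_mem_divisors hd)), sum_empty,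
      if_neg fun h ↦ hk h.dvd]
  obtain ⟨m, rfl⟩ := hk
  have hkm : k.Coprime m := Nat.coprime_of_squarefree_mul hl
  have hk0 : k ≠ 0 := left_ne_zero_of_mul hl.ne_zero
  have hm0 : m ≠ 0 := right_ne_zero_of_mul hl.ne_zero
  have hfilter : {d ∈ (k * m).divisors | k ∣ d} = m.divisors.image (k * ·) := by
    ext d
    simp only [mem_filter, Nat.mem_divisors, mem_image]
    constructor
    · rintro ⟨⟨hd, -⟩, e, rfl⟩
      exact ⟨e, ⟨(Nat.mul_dvd_mul_iff_left (Nat.pos_of_ne_zero hk0)).mp hd, hm0⟩, rfl⟩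
    · rintro ⟨e, ⟨he, -⟩, rfl⟩
      exact ⟨⟨Nat.mul_dvd_mul_left k he, hl.ne_zero⟩, Nat.dvd_mul_right k e⟩
  calc ∑ d ∈ (k * m).divisors with k ∣ d, μ d = ∑ e ∈ m.divisors, μ (k * e) := by
        rw [hfilter, sum_image fun _ _ _ _ h ↦ Nat.eq_of_mul_eq_mul_left (Nat.pos_of_ne_zero hk0) h]
    _ = μ k * ∑ e ∈ m.divisors, μ e := by
        rw [mul_sum]
        refine sum_congr rfl fun e he ↦ ?_
        exact ArithmeticFunction.isMultiplicative_moebius.map_mul_of_coprime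
          (hkm.coprime_dvd_right (Nat.dvd_of_mem_divisors he))
    _ = μ k * if m = 1 then 1 else 0 := by
        rw [← ArithmeticFunction.coe_mul_zeta_apply, ArithmeticFunction.moebius_mul_coe_zeta,
          ArithmeticFunction.one_apply]
    _ = if k = k * m then μ (k * m) else 0 := by
        by_cases hm : m = 1 <;> simp [hm, hk0]

section SelbergSieve

/-- The sifting moduli of level `R`: the divisors of the sifting product that are at most `R`. -/
def selbergSupport (s : BoundingSieve) (R : ℕ) : Finset ℕ := {d ∈ s.prodPrimes.divisors | d ≤ R}

/-- The sum `S = ∑ g(l)` of the Selberg terms over the moduli of level `R`; the main term of the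
Selberg sieve is `X / S`. -/
noncomputable def selbergSum (s : BoundingSieve) (R : ℕ) : ℝ :=
  ∑ l ∈ selbergSupport s R, s.selbergTerms l

/-- The weights `λ_d = μ(d) / (ν(d) S) * ∑_{d ∣ l} g(l)` minimising the main term of the `Λ²` sieve
subject to `λ_1 = 1` and `λ_d = 0` for `d > R`. -/
noncomputable def selbergWeight (s : BoundingSieve) (R d : ℕ) : ℝ :=
  (s.nu d)⁻¹ * μ d * (∑ l ∈ selbergSupport s R with d ∣ l, s.selbergTerms l) / selbergSum s R

variable {s : BoundingSieve} {R : ℕ}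

theorem dvd_prodPrimes_of_mem_selbergSupport {d : ℕ} (hd : d ∈ selbergSupport s R) :
    d ∣ s.prodPrimes :=
  Nat.dvd_of_mem_divisors (mem_filter.mp hd).1

theorem selbergTerms_pos_of_mem_selbergSupport {d : ℕ} (hd : d ∈ selbergSupport s R) :
    0 < s.selbergTerms d :=
  BoundingSieve.selbergTerms_pos (dvd_prodPrimes_of_mem_selbergSupport hd)

theorem mem_selbergSupport_of_dvd {d l : ℕ} (hl : l ∈ selbergSupport s R) (hdl : d ∣ l) :
    d ∈ selbergSupport s R := by
  have hlP := dvd_prodPrimes_of_mem_selbergSupport hl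
  have hl0 : 0 < l :=
    Nat.pos_of_ne_zero (ne_zero_of_dvd_ne_zero BoundingSieve.prodPrimes_ne_zero hlP)
  exact mem_filter.mpr ⟨Nat.mem_divisors.mpr ⟨hdl.trans hlP, BoundingSieve.prodPrimes_ne_zero⟩,
    (Nat.le_of_dvd hl0 hdl).trans (mem_filter.mp hl).2⟩

theorem selbergSum_nonneg : 0 ≤ selbergSum s R :=
  sum_nonneg fun _ hl ↦ (selbergTerms_pos_of_mem_selbergSupport hl).le

theorem selbergSum_pos (hR : 1 ≤ R) : 0 < selbergSum s R :=
  sum_pos (fun _ ↦ selbergTerms_pos_of_mem_selbergSupport)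
    ⟨1, mem_filter.mpr ⟨Nat.one_mem_divisors.mpr BoundingSieve.prodPrimes_ne_zero, hR⟩⟩

theorem selbergWeight_one (hR : 1 ≤ R) : selbergWeight s R 1 = 1 := by
  have hsum : ∑ l ∈ selbergSupport s R with 1 ∣ l, s.selbergTerms l = selbergSum s R := by
    simp only [one_dvd, filter_true, selbergSum]
  rw [selbergWeight, hsum, s.nu_mult.map_one, ArithmeticFunction.moebius_apply_one, inv_one,
    Int.cast_one, one_mul, one_mul, div_self (selbergSum_pos hR).ne']

theorem selbergWeight_eq_zero {d : ℕ} (hd : d ∉ selbergSupport s R) : selbergWeight s R d = 0 := by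
  have hempty : {l ∈ selbergSupport s R | d ∣ l} = ∅ :=
    filter_false_of_mem fun l hl hdl ↦ hd (mem_selbergSupport_of_dvd hl hdl)
  rw [selbergWeight, hempty, sum_empty, mul_zero, zero_div]

/-- Möbius inversion: the linear forms diagonalising the main term are supported on `l ≤ R`. -/
theorem sum_nu_mul_selbergWeight (k : ℕ) :
    ∑ d ∈ s.prodPrimes.divisors with k ∣ d, s.nu d * selbergWeight s R d =
      if k ∈ selbergSupport s R then μ k * s.selbergTerms k / selbergSum s R else 0 := by
  calc ∑ d ∈ s.prodPrimes.divisors with k ∣ d, s.nu d * selbergWeight s R d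
      = ∑ d ∈ s.prodPrimes.divisors with k ∣ d, ∑ l ∈ selbergSupport s R with d ∣ l,
          μ d * s.selbergTerms l / selbergSum s R := by
        refine sum_congr rfl fun d hd ↦ ?_
        have hν := BoundingSieve.nu_ne_zero (Nat.dvd_of_mem_divisors (mem_filter.mp hd).1)
        rw [selbergWeight, ← sum_div, ← mul_sum]
        field_simp
    _ = ∑ l ∈ selbergSupport s R, ∑ d ∈ l.divisors with k ∣ d,
          μ d * s.selbergTerms l / selbergSum s R := by
        refine sum_comm' fun d l ↦ ?_
        simp only [mem_filter, Nat.mem_divisors]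
        constructor
        · rintro ⟨⟨-, hkd⟩, hl, hdl⟩
          exact ⟨⟨⟨hdl, ne_zero_of_dvd_ne_zero BoundingSieve.prodPrimes_ne_zero
            (dvd_prodPrimes_of_mem_selbergSupport hl)⟩, hkd⟩, hl⟩
        · rintro ⟨⟨⟨hdl, -⟩, hkd⟩, hl⟩
          exact ⟨⟨⟨hdl.trans (dvd_prodPrimes_of_mem_selbergSupport hl),
            BoundingSieve.prodPrimes_ne_zero⟩, hkd⟩, hl, hdl⟩
    _ = ∑ l ∈ selbergSupport s R,
          if k = l then μ l * s.selbergTerms l / selbergSum s R else 0 := by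
        refine sum_congr rfl fun l hl ↦ ?_
        have hsq := BoundingSieve.squarefree_of_dvd_prodPrimes
          (dvd_prodPrimes_of_mem_selbergSupport hl)
        rw [← sum_div, ← sum_mul, ← Int.cast_sum, sum_divisors_filter_dvd_moebius hsq]
        split_ifs <;> simp
    _ = _ := sum_ite_eq _ _ _

theorem mainSum_lambdaSquared_selbergWeight (hR : 1 ≤ R) :
    s.mainSum (BoundingSieve.lambdaSquared (selbergWeight s R)) = (selbergSum s R)⁻¹ := by
  have hS := (selbergSum_pos (s := s) hR).ne'
  calc s.mainSum (BoundingSieve.lambdaSquared (selbergWeight s R))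
      = ∑ l ∈ s.prodPrimes.divisors, if l ∈ selbergSupport s R then
          s.selbergTerms l / selbergSum s R ^ 2 else 0 := by
        rw [BoundingSieve.mainSum_lambdaSquared_eq_sum_mul_sum_sq]
        refine sum_congr rfl fun l hl ↦ ?_
        rw [← sum_filter, sum_nu_mul_selbergWeight]
        split_ifs with hlR
        · have hg := (selbergTerms_pos_of_mem_selbergSupport hlR).ne'
          have hμ : (μ l : ℝ) ^ 2 = 1 := by
            exact_mod_cast ArithmeticFunction.moebius_sq_eq_one_of_squarefree
              (BoundingSieve.squarefree_of_mem_divisors_prodPrimes hl)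
          field_simp
          exact hμ
        · simp
    _ = ∑ l ∈ selbergSupport s R, s.selbergTerms l / selbergSum s R ^ 2 := by
        rw [← sum_filter, filter_mem_eq_inter, selbergSupport,
          inter_eq_right.mpr (filter_subset _ _)]
    _ = (selbergSum s R)⁻¹ := by
        rw [← sum_div, ← selbergSum]
        field_simp

theorem coprime_div_of_dvd_prodPrimes {d l : ℕ} (hl : l ∣ s.prodPrimes) (hdl : d ∣ l) :
    d.Coprime (l / d) :=
  Nat.coprime_of_squarefree_mul <|
    (Nat.mul_div_cancel' hdl).symm ▸ BoundingSieve.squarefree_of_dvd_prodPrimes hl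

theorem inv_nu_mul_selbergTerms {d l : ℕ} (hl : l ∣ s.prodPrimes) (hdl : d ∣ l) :
    (s.nu d)⁻¹ * s.selbergTerms l = ∑ k ∈ d.divisors, s.selbergTerms (k * (l / d)) := by
  have hcop := coprime_div_of_dvd_prodPrimes hl hdl
  have hd := BoundingSieve.sum_divisors_selbergTerms_eq_selbergTerms_mul_nu_inv (hdl.trans hl)
  rw [← sum_filter,
    Nat.divisors_filter_dvd_of_dvd BoundingSieve.prodPrimes_ne_zero (hdl.trans hl)] at hd
  calc (s.nu d)⁻¹ * s.selbergTerms l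
      = s.selbergTerms d * (s.nu d)⁻¹ * s.selbergTerms (l / d) := by
        nth_rw 1 [← Nat.mul_div_cancel' hdl]
        rw [BoundingSieve.selbergTerms_isMultiplicative.map_mul_of_coprime hcop]
        ring
    _ = ∑ k ∈ d.divisors, s.selbergTerms (k * (l / d)) := by
        rw [← hd, sum_mul]
        exact sum_congr rfl fun k hk ↦
          (BoundingSieve.selbergTerms_isMultiplicative.map_mul_of_coprime
            (hcop.coprime_dvd_left (Nat.dvd_of_mem_divisors hk))).symm

/-- The products `k * (l / d)` with `k ∣ d` and `d ∣ l` are distinct: `k` is the gcd with `d`. -/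
theorem inv_nu_mul_sum_selbergTerms_le (d : ℕ) :
    (s.nu d)⁻¹ * ∑ l ∈ selbergSupport s R with d ∣ l, s.selbergTerms l ≤ selbergSum s R := by
  rcases eq_or_ne d 0 with rfl | hd0
  · simpa using selbergSum_nonneg
  have hmem {k l : ℕ} (hk : k ∈ d.divisors) (hl : l ∈ {l ∈ selbergSupport s R | d ∣ l}) :
      k * (l / d) ∈ {m ∈ selbergSupport s R | m.gcd d = k} := by
    obtain ⟨hl, hdl⟩ := mem_filter.mp hl
    have hkd := Nat.dvd_of_mem_divisors hk
    have hcop := coprime_div_of_dvd_prodPrimes (dvd_prodPrimes_of_mem_selbergSupport hl) hdl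
    refine mem_filter.mpr ⟨mem_selbergSupport_of_dvd hl ?_, ?_⟩
    · calc k * (l / d) ∣ d * (l / d) := Nat.mul_dvd_mul_right hkd _
        _ = l := Nat.mul_div_cancel' hdl
    · rw [hcop.symm.gcd_mul_right_cancel, Nat.gcd_eq_left hkd]
  calc (s.nu d)⁻¹ * ∑ l ∈ selbergSupport s R with d ∣ l, s.selbergTerms l
      = ∑ k ∈ d.divisors, ∑ l ∈ selbergSupport s R with d ∣ l, s.selbergTerms (k * (l / d)) := by
        rw [mul_sum, sum_comm]
        refine sum_congr rfl fun l hl ↦ ?_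
        obtain ⟨hl, hdl⟩ := mem_filter.mp hl
        exact inv_nu_mul_selbergTerms (dvd_prodPrimes_of_mem_selbergSupport hl) hdl
    _ ≤ ∑ k ∈ d.divisors, ∑ m ∈ selbergSupport s R with m.gcd d = k, s.selbergTerms m := by
        refine sum_le_sum fun k hk ↦ ?_
        have hinj : Set.InjOn (fun l ↦ k * (l / d)) ↑(filter (d ∣ ·) (selbergSupport s R)) := by
          intro l hl m hm hlm
          have := Nat.eq_of_mul_eq_mul_left (Nat.pos_of_mem_divisors hk) hlm
          rwa [Nat.div_left_inj (mem_filter.mp hl).2 (mem_filter.mp hm).2] at this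
        rw [← sum_image (f := s.selbergTerms) hinj]
        refine sum_le_sum_of_subset_of_nonneg (image_subset_iff.mpr fun l ↦ hmem hk) fun m hm _ ↦ ?_
        exact (selbergTerms_pos_of_mem_selbergSupport (mem_filter.mp hm).1).le
    _ = selbergSum s R :=
        sum_fiberwise_of_maps_to
          (fun m _ ↦ Nat.mem_divisors.mpr ⟨Nat.gcd_dvd_right m d, hd0⟩) _

theorem abs_selbergWeight_le_one (d : ℕ) : |selbergWeight s R d| ≤ 1 := by
  by_cases hd : d ∈ selbergSupport s R
  swap
  · rw [selbergWeight_eq_zero hd, abs_zero]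
    exact zero_le_one
  have hH : 0 ≤ (s.nu d)⁻¹ * ∑ l ∈ selbergSupport s R with d ∣ l, s.selbergTerms l :=
    mul_nonneg (inv_nonneg.mpr (BoundingSieve.nu_pos_of_dvd_prodPrimes
        (dvd_prodPrimes_of_mem_selbergSupport hd)).le)
      (sum_nonneg fun l hl ↦ (selbergTerms_pos_of_mem_selbergSupport (mem_filter.mp hl).1).le)
  have hμ : |(μ d : ℝ)| ≤ 1 := by exact_mod_cast ArithmeticFunction.abs_moebius_le_one
  calc |selbergWeight s R d|
      = |(μ d : ℝ)| * ((s.nu d)⁻¹ * ∑ l ∈ selbergSupport s R with d ∣ l, s.selbergTerms l) /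
          selbergSum s R := by
        rw [selbergWeight, abs_div, abs_of_nonneg selbergSum_nonneg, mul_right_comm, abs_mul,
          abs_of_nonneg hH, mul_comm]
    _ ≤ 1 := div_le_one_of_le₀ ((mul_le_of_le_one_left hH hμ).trans
        (inv_nu_mul_sum_selbergTerms_le d)) selbergSum_nonneg

theorem abs_lambdaSquared_le_sum (w : ℕ → ℝ) {n N : ℕ} (hN : N ≠ 0) (hn : n ∣ N) :
    |BoundingSieve.lambdaSquared w n| ≤
      ∑ d ∈ N.divisors, ∑ e ∈ N.divisors, if n = d.lcm e then |w d| * |w e| else 0 := by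
  have hsub : n.divisors ⊆ N.divisors := Nat.divisors_subset_of_dvd hN hn
  have hterm (d e : ℕ) : 0 ≤ if n = d.lcm e then |w d| * |w e| else 0 := by positivity
  calc |BoundingSieve.lambdaSquared w n|
      ≤ ∑ d ∈ n.divisors, ∑ e ∈ n.divisors, if n = d.lcm e then |w d| * |w e| else 0 := by
        refine (abs_sum_le_sum_abs _ _).trans (sum_le_sum fun d _ ↦ ?_)
        refine (abs_sum_le_sum_abs _ _).trans (sum_le_sum fun e _ ↦ ?_)
        split_ifs
        · exact (abs_mul _ _).le
        · exact abs_zero.le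
    _ ≤ ∑ d ∈ n.divisors, ∑ e ∈ N.divisors, if n = d.lcm e then |w d| * |w e| else 0 :=
        sum_le_sum fun d _ ↦ sum_le_sum_of_subset_of_nonneg hsub fun e _ _ ↦ hterm d e
    _ ≤ _ :=
        sum_le_sum_of_subset_of_nonneg hsub fun d _ _ ↦ sum_nonneg fun e _ ↦ hterm d e

theorem errSum_lambdaSquared_le (w : ℕ → ℝ) :
    s.errSum (BoundingSieve.lambdaSquared w) ≤
      ∑ d ∈ s.prodPrimes.divisors, ∑ e ∈ s.prodPrimes.divisors,
        |w d| * |w e| * |s.rem (d.lcm e)| := by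
  calc s.errSum (BoundingSieve.lambdaSquared w)
      ≤ ∑ n ∈ s.prodPrimes.divisors, ∑ d ∈ s.prodPrimes.divisors, ∑ e ∈ s.prodPrimes.divisors,
          if n = d.lcm e then |w d| * |w e| * |s.rem n| else 0 := by
        refine sum_le_sum fun n hn ↦ ?_
        grw [abs_lambdaSquared_le_sum w BoundingSieve.prodPrimes_ne_zero
          (Nat.dvd_of_mem_divisors hn)]
        simp only [sum_mul, ite_mul, zero_mul, le_refl]
    _ = ∑ d ∈ s.prodPrimes.divisors, ∑ e ∈ s.prodPrimes.divisors,
          |w d| * |w e| * |s.rem (d.lcm e)| := by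
        rw [sum_comm]
        refine sum_congr rfl fun d hd ↦ ?_
        rw [sum_comm]
        refine sum_congr rfl fun e he ↦ ?_
        rw [sum_ite_eq_of_mem' _ _ _ (Nat.mem_divisors.mpr ⟨Nat.lcm_dvd
          (Nat.dvd_of_mem_divisors hd) (Nat.dvd_of_mem_divisors he),
          BoundingSieve.prodPrimes_ne_zero⟩)]

theorem siftedSum_le_totalMass_div_selbergSum_add (s : BoundingSieve) (hR : 1 ≤ R) :
    s.siftedSum ≤ s.totalMass / selbergSum s R +
      ∑ d ∈ selbergSupport s R, ∑ e ∈ selbergSupport s R, |s.rem (d.lcm e)| := by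
  have hsub : selbergSupport s R ⊆ s.prodPrimes.divisors := filter_subset _ _
  have herr : s.errSum (BoundingSieve.lambdaSquared (selbergWeight s R)) ≤
      ∑ d ∈ selbergSupport s R, ∑ e ∈ selbergSupport s R, |s.rem (d.lcm e)| := by
    refine (errSum_lambdaSquared_le _).trans ?_
    rw [← sum_subset hsub fun d _ hd ↦ by simp [selbergWeight_eq_zero hd]]
    refine sum_le_sum fun d _ ↦ ?_
    rw [← sum_subset hsub fun e _ he ↦ by simp [selbergWeight_eq_zero he]]
    refine sum_le_sum fun e _ ↦ mul_le_of_le_one_left (abs_nonneg _) ?_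
    exact mul_le_one₀ (abs_selbergWeight_le_one d) (abs_nonneg _) (abs_selbergWeight_le_one e)
  have hmoebius := BoundingSieve.upperMoebius_lambdaSquared _ (selbergWeight_one (s := s) hR)
  calc s.siftedSum ≤ _ := BoundingSieve.siftedSum_le_mainSum_errSum_of_upperMoebius _ hmoebius
    _ ≤ _ := by
        rw [mainSum_lambdaSquared_selbergWeight hR, ← div_eq_mul_inv]
        gcongr

end SelbergSieve

theorem nu_le_selbergTerms {s : BoundingSieve} {l : ℕ} (hl : l ∣ s.prodPrimes) :
    s.nu l ≤ s.selbergTerms l := by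
  rw [BoundingSieve.selbergTerms_apply]
  refine le_mul_of_one_le_right (BoundingSieve.nu_pos_of_dvd_prodPrimes hl).le ?_
  refine one_le_prod fun p hp ↦ ?_
  have hpP : p ∣ s.prodPrimes := (Nat.dvd_of_mem_primeFactors hp).trans hl
  have hpp : p.Prime := Nat.prime_of_mem_primeFactors hp
  have hν₀ := s.nu_pos_of_prime p hpp hpP
  have hν₁ := s.nu_lt_one_of_prime p hpp hpP
  exact (one_le_inv₀ (by linarith)).mpr (by linarith)

theorem sum_Icc_inv_le_sum_squarefree_mul_sum_sq (R : ℕ) :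
    ∑ n ∈ Icc 1 R, (n : ℝ)⁻¹ ≤
      (∑ l ∈ Icc 1 R with Squarefree l, (l : ℝ)⁻¹) * ∑ k ∈ Icc 1 R, ((k : ℝ) ^ 2)⁻¹ := by
  set pairs : Finset (ℕ × ℕ) := {l ∈ Icc 1 R | Squarefree l} ×ˢ Icc 1 R
  calc ∑ n ∈ Icc 1 R, (n : ℝ)⁻¹
      ≤ ∑ n ∈ Icc 1 R, ∑ y ∈ pairs with y.2 ^ 2 * y.1 = n, (y.1 : ℝ)⁻¹ * ((y.2 : ℝ) ^ 2)⁻¹ := by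
        refine sum_le_sum fun n hn ↦ ?_
        obtain ⟨hn1, hnR⟩ := mem_Icc.mp hn
        obtain ⟨l, k, hl, hk, rfl, hsq⟩ := Nat.sq_mul_squarefree_of_pos hn1
        have hlR : l ≤ R := (Nat.le_mul_of_pos_left l (pow_pos hk 2)).trans hnR
        have hkR : k ≤ R :=
          ((Nat.le_self_pow two_ne_zero k).trans (Nat.le_mul_of_pos_right _ hl)).trans hnR
        have hmem : (l, k) ∈ {y ∈ pairs | y.2 ^ 2 * y.1 = k ^ 2 * l} := by
          simp only [pairs, mem_filter, mem_product, mem_Icc]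
          exact ⟨⟨⟨⟨hl, hlR⟩, hsq⟩, hk, hkR⟩, trivial⟩
        refine le_trans (le_of_eq ?_) (single_le_sum (fun y _ ↦ by positivity) hmem)
        push_cast
        rw [mul_inv, mul_comm]
    _ ≤ ∑ y ∈ pairs, (y.1 : ℝ)⁻¹ * ((y.2 : ℝ) ^ 2)⁻¹ :=
        sum_fiberwise_le_sum_of_sum_fiber_nonneg fun _ _ ↦ sum_nonneg fun _ _ ↦ by positivity
    _ = _ := by rw [sum_product, sum_mul_sum]

theorem log_div_two_le_sum_squarefree_inv (R : ℕ) :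
    log (R + 1) / 2 ≤ ∑ l ∈ Icc 1 R with Squarefree l, (l : ℝ)⁻¹ := by
  have hharmonic : log (R + 1) ≤ ∑ n ∈ Icc 1 R, (n : ℝ)⁻¹ := by
    simpa [harmonic_eq_sum_Icc] using log_add_one_le_harmonic R
  have hsq : ∑ k ∈ Icc 1 R, ((k : ℝ) ^ 2)⁻¹ ≤ 2 := by
    have h := sum_Ioo_inv_sq_le (α := ℝ) 0 (R + 1)
    have hIoo : Ioo 0 (R + 1) = Icc 1 R := by ext; simp; omega
    simpa [hIoo] using h
  rw [div_le_iff₀ two_pos]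
  calc log (R + 1) ≤ _ := hharmonic
    _ ≤ _ := sum_Icc_inv_le_sum_squarefree_mul_sum_sq R
    _ ≤ (∑ l ∈ Icc 1 R with Squarefree l, (l : ℝ)⁻¹) * 2 := by gcongr

theorem coprime_primorial_of_lt {p R : ℕ} (hp : p.Prime) (hRp : R < p) :
    p.Coprime (primorial R) := by
  rw [hp.coprime_iff_not_dvd, hp.dvd_primorial_iff]
  omega

section BrunTitchmarsh

theorem abs_card_Ioc_modEq_sub_le_one {a b r : ℕ} (hab : a ≤ b) (hr : 0 < r) (v : ℕ) :
    |(#{n ∈ Ioc a b | n ≡ v [MOD r]} : ℝ) - (b - a) / r| ≤ 1 := by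
  have hcard := Nat.Ioc_filter_modEq_card a b hr v
  have hle : ((a : ℚ) - v) / r ≤ (b - v) / r := by gcongr
  rw [max_eq_left (sub_nonneg.mpr (Int.floor_le_floor hle))] at hcard
  have hdiff : ((b : ℚ) - a) / r = (b - v) / r - (a - v) / r := by ring
  have hQ : |(#{n ∈ Ioc a b | n ≡ v [MOD r]} : ℚ) - (b - a) / r| ≤ 1 := by
    have hcardQ : (#{n ∈ Ioc a b | n ≡ v [MOD r]} : ℚ) =
        (⌊((b : ℚ) - v) / r⌋ - ⌊((a : ℚ) - v) / r⌋ : ℤ) := by exact_mod_cast hcard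
    rw [hcardQ, hdiff, abs_le]
    push_cast
    constructor <;> linarith [Int.floor_le (((b : ℚ) - v) / r), Int.floor_le (((a : ℚ) - v) / r),
      Int.lt_floor_add_one (((b : ℚ) - v) / r), Int.lt_floor_add_one (((a : ℚ) - v) / r)]
  have hR := (Rat.cast_le (K := ℝ)).mpr hQ
  push_cast at hR
  exact hR

theorem abs_card_Ioc_modEq_dvd_sub_le_one {a b q d : ℕ} (hab : a ≤ b) (hq : 0 < q) (hd : 0 < d)
    (hqd : q.Coprime d) (v : ℕ) :
    |(#{n ∈ Ioc a b | n ≡ v [MOD q] ∧ d ∣ n} : ℝ) - (b - a) / (q * d)| ≤ 1 := by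
  obtain ⟨u, huv, hu0⟩ := Nat.chineseRemainder hqd v 0
  have hiff (n : ℕ) : n ≡ v [MOD q] ∧ d ∣ n ↔ n ≡ u [MOD q * d] := by
    rw [← Nat.modEq_and_modEq_iff_modEq_mul hqd, ← Nat.modEq_zero_iff_dvd]
    exact and_congr ⟨fun h ↦ h.trans huv.symm, fun h ↦ h.trans huv⟩
      ⟨fun h ↦ h.trans hu0.symm, fun h ↦ h.trans hu0⟩
  simpa only [hiff, Nat.cast_mul] using abs_card_Ioc_modEq_sub_le_one hab (Nat.mul_pos hq hd) u

/-- The sieve problem of removing the multiples of the primes `p ≤ R` from the integers `n` in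
`(a, b]` with `n ≡ v [MOD q]`. -/
noncomputable def progressionSieve (q v a b R : ℕ) : BoundingSieve where
  support := {n ∈ Ioc a b | n ≡ v [MOD q]}
  prodPrimes := primorial R
  prodPrimes_squarefree := squarefree_primorial R
  weights _ := 1
  weights_nonneg _ := zero_le_one
  totalMass := (b - a) / q
  nu := ⟨fun n ↦ (n : ℝ)⁻¹, by simp⟩
  nu_mult := by
    refine ⟨by simp, fun {m n} _ ↦ ?_⟩
    simp [mul_comm]
  nu_pos_of_prime p hp _ := inv_pos.mpr (Nat.cast_pos.mpr hp.pos)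
  nu_lt_one_of_prime p hp _ := inv_lt_one_of_one_lt₀ (Nat.one_lt_cast.mpr hp.one_lt)

variable {q a b R : ℕ}

theorem abs_rem_progressionSieve_le_one (hab : a ≤ b) (hq : 0 < q) (hqR : q.Coprime (primorial R))
    (v : ℕ) {d : ℕ} (hd : d ∣ primorial R) : |(progressionSieve q v a b R).rem d| ≤ 1 := by
  have hd0 : 0 < d := Nat.pos_of_dvd_of_pos hd (primorial_pos R)
  have hrem : (progressionSieve q v a b R).rem d =
      #{n ∈ Ioc a b | n ≡ v [MOD q] ∧ d ∣ n} - (b - a) / (q * d) := by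
    simp only [progressionSieve, BoundingSieve.rem, BoundingSieve.multSum, sum_boole, filter_filter,
      ArithmeticFunction.coe_mk]
    ring
  rw [hrem]
  exact abs_card_Ioc_modEq_dvd_sub_le_one hab hq hd0 (hqR.coprime_dvd_right hd) v

theorem log_div_two_le_selbergSum_progressionSieve (q v a b R : ℕ) :
    log (R + 1) / 2 ≤ selbergSum (progressionSieve q v a b R) R := by
  calc log (R + 1) / 2 ≤ ∑ l ∈ Icc 1 R with Squarefree l, (l : ℝ)⁻¹ :=
        log_div_two_le_sum_squarefree_inv R
    _ ≤ ∑ l ∈ selbergSupport (progressionSieve q v a b R) R,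
          (progressionSieve q v a b R).nu l := by
        refine sum_le_sum_of_subset_of_nonneg (fun l hl ↦ ?_) fun l hl _ ↦
          (BoundingSieve.nu_pos_of_dvd_prodPrimes (dvd_prodPrimes_of_mem_selbergSupport hl)).le
        obtain ⟨hlR, hsq⟩ := mem_filter.mp hl
        have hlR := (mem_Icc.mp hlR).2
        exact mem_filter.mpr ⟨Nat.mem_divisors.mpr
          ⟨hsq.dvd_primorial.trans (primorial_dvd_primorial hlR), primorial_ne_zero R⟩, hlR⟩
    _ ≤ selbergSum (progressionSieve q v a b R) R :=
        sum_le_sum fun l hl ↦ nu_le_selbergTerms (dvd_prodPrimes_of_mem_selbergSupport hl)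

theorem siftedSum_progressionSieve_le (hab : a ≤ b) (hq : 0 < q) (hqR : q.Coprime (primorial R))
    (hR : 1 ≤ R) (v : ℕ) :
    (progressionSieve q v a b R).siftedSum ≤ 2 * (b - a) / (q * log (R + 1)) + (R : ℝ) ^ 2 := by
  set s := progressionSieve q v a b R
  have hlog : 0 < log (R + 1) := log_pos (by norm_cast; omega)
  have hmass : s.totalMass = (b - a) / q := rfl
  have hmass_nonneg : (0 : ℝ) ≤ (b - a) / q :=
    div_nonneg (sub_nonneg.mpr (Nat.cast_le.mpr hab)) q.cast_nonneg
  have hmain : s.totalMass / selbergSum s R ≤ 2 * (b - a) / (q * log (R + 1)) := by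
    calc s.totalMass / selbergSum s R ≤ (b - a) / q / (log (R + 1) / 2) := by
          rw [hmass]
          gcongr
          exact log_div_two_le_selbergSum_progressionSieve q v a b R
      _ = 2 * (b - a) / (q * log (R + 1)) := by field_simp
  have hcard : (#(selbergSupport s R) : ℝ) ≤ R := by
    have hsub : selbergSupport s R ⊆ Icc 1 R := fun d hd ↦
      mem_Icc.mpr ⟨Nat.pos_of_mem_divisors (mem_filter.mp hd).1, (mem_filter.mp hd).2⟩
    simpa using card_le_card hsub
  have herr : ∑ d ∈ selbergSupport s R, ∑ e ∈ selbergSupport s R, |s.rem (d.lcm e)| ≤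
      (R : ℝ) ^ 2 := by
    calc ∑ d ∈ selbergSupport s R, ∑ e ∈ selbergSupport s R, |s.rem (d.lcm e)|
        ≤ ∑ _ ∈ selbergSupport s R, ∑ _ ∈ selbergSupport s R, (1 : ℝ) := by
          refine sum_le_sum fun _ hd ↦ sum_le_sum fun _ he ↦ ?_
          exact abs_rem_progressionSieve_le_one hab hq hqR v (Nat.lcm_dvd
            (dvd_prodPrimes_of_mem_selbergSupport hd) (dvd_prodPrimes_of_mem_selbergSupport he))
      _ = (#(selbergSupport s R) : ℝ) ^ 2 := by simp [sq]
      _ ≤ (R : ℝ) ^ 2 := by gcongr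
  exact (siftedSum_le_totalMass_div_selbergSum_add s hR).trans (add_le_add hmain herr)

/-- A form of the **Brun–Titchmarsh inequality**. -/
theorem card_primes_Ioc_modEq_le (hab : a ≤ b) (hq : 0 < q) (hqR : q.Coprime (primorial R))
    (hR : 1 ≤ R) (hRa : R ≤ a) (v : ℕ) :
    (#{p ∈ Ioc a b | p.Prime ∧ p ≡ v [MOD q]} : ℝ) ≤
      2 * (b - a) / (q * log (R + 1)) + (R : ℝ) ^ 2 := by
  have hsifted : (progressionSieve q v a b R).siftedSum =
      #{n ∈ {n ∈ Ioc a b | n ≡ v [MOD q]} | (primorial R).Coprime n} := sum_boole _ _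
  refine le_trans ?_ (siftedSum_progressionSieve_le hab hq hqR hR v)
  rw [hsifted, filter_filter]
  refine Nat.cast_le.mpr (card_le_card fun p hp ↦ ?_)
  obtain ⟨hpab, hpp, hpv⟩ := mem_filter.mp hp
  have hRp : R < p := hRa.trans_lt (mem_Ioc.mp hpab).1
  exact mem_filter.mpr ⟨hpab, hpv, (coprime_primorial_of_lt hpp hRp).symm⟩

end BrunTitchmarsh

section PrimeSums

variable {a b : ℝ}

theorem sum_log_div_primes_Ioc_two_mul_le (ha : 0 < a) :
    ∑ p ∈ Ioc ⌊a⌋₊ ⌊2 * a⌋₊ with p.Prime, log p / p ≤ 2 * log 4 := by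
  calc ∑ p ∈ Ioc ⌊a⌋₊ ⌊2 * a⌋₊ with p.Prime, log p / p
      ≤ ∑ p ∈ Ioc ⌊a⌋₊ ⌊2 * a⌋₊ with p.Prime, log p / a := by
        refine sum_le_sum fun p hp ↦ ?_
        have hap : a < p := (Nat.floor_lt ha.le).mp (mem_Ioc.mp (mem_filter.mp hp).1).1
        have := log_natCast_nonneg p
        gcongr
    _ ≤ Chebyshev.theta (2 * a) / a := by
        rw [← sum_div, Chebyshev.theta]
        gcongr
        exact Nat.zero_le _
    _ ≤ log 4 * (2 * a) / a := by
        gcongr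
        exact Chebyshev.theta_le_log4_mul_x (by positivity)
    _ = 2 * log 4 := by field_simp

theorem sum_log_div_primes_Ioc_two_pow_mul_le (ha : 0 < a) (k : ℕ) :
    ∑ p ∈ Ioc ⌊a⌋₊ ⌊2 ^ k * a⌋₊ with p.Prime, log p / p ≤ 2 * log 4 * k := by
  induction k with
  | zero => simp
  | succ k ih =>
    have hstep := sum_log_div_primes_Ioc_two_mul_le (a := 2 ^ k * a) (by positivity)
    rw [← mul_assoc, ← pow_succ'] at hstep
    have hle₁ : ⌊a⌋₊ ≤ ⌊2 ^ k * a⌋₊ :=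
      Nat.floor_mono (le_mul_of_one_le_left ha.le (one_le_pow₀ one_le_two))
    have hle₂ : ⌊2 ^ k * a⌋₊ ≤ ⌊2 ^ (k + 1) * a⌋₊ := by
      gcongr
      · exact one_le_two
      · omega
    rw [sum_filter] at ih hstep ⊢
    rw [← sum_Ioc_consecutive _ hle₁ hle₂]
    push_cast
    linarith

theorem sum_log_div_primes_Ioc_le (ha : 0 < a) (hab : a ≤ b) :
    ∑ p ∈ Ioc ⌊a⌋₊ ⌊b⌋₊ with p.Prime, log p / p ≤ 4 * log (2 * b / a) := by
  have hb : 0 < b := ha.trans_le hab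
  have hlog4 : log 4 = 2 * log 2 := by
    rw [← log_rpow two_pos]
    norm_num
  set k := ⌈logb 2 (b / a)⌉₊
  have hbk : b ≤ 2 ^ k * a := by
    rw [← div_le_iff₀ ha, ← rpow_natCast, ← logb_le_iff_le_rpow one_lt_two (by positivity)]
    exact Nat.le_ceil _
  have hk : k ≤ log (2 * b / a) / log 2 := by
    have hnonneg : 0 ≤ logb 2 (b / a) := logb_nonneg one_lt_two ((one_le_div ha).mpr hab)
    calc (k : ℝ) ≤ logb 2 (b / a) + 1 := (Nat.ceil_lt_add_one hnonneg).le
      _ = log (2 * b / a) / log 2 := by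
        rw [mul_div_assoc, log_mul two_ne_zero (by positivity), logb]
        field_simp
        ring
  calc ∑ p ∈ Ioc ⌊a⌋₊ ⌊b⌋₊ with p.Prime, log p / p
      ≤ ∑ p ∈ Ioc ⌊a⌋₊ ⌊2 ^ k * a⌋₊ with p.Prime, log p / p := by
        gcongr
    _ ≤ 2 * log 4 * k := sum_log_div_primes_Ioc_two_pow_mul_le ha k
    _ ≤ 2 * log 4 * (log (2 * b / a) / log 2) := by gcongr
    _ = 4 * log (2 * b / a) := by
        rw [hlog4]
        field_simp
        ring

theorem sum_inv_primes_Ioc_le (ha : 1 < a) (hab : a ≤ b) :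
    ∑ p ∈ Ioc ⌊a⌋₊ ⌊b⌋₊ with p.Prime, (p : ℝ)⁻¹ ≤ 4 * log (2 * b / a) / log a := by
  have hloga := log_pos ha
  rw [le_div_iff₀ hloga, sum_mul]
  refine le_trans (sum_le_sum fun p hp ↦ ?_)
    (sum_log_div_primes_Ioc_le (zero_lt_one.trans ha) hab)
  have hap : a < p := (Nat.floor_lt (by positivity)).mp (mem_Ioc.mp (mem_filter.mp hp).1).1
  rw [inv_mul_eq_div]
  gcongr

end PrimeSums

section TransitionPrimes

theorem Pplus_mem_primeFactors {n : ℕ} (hn : 2 ≤ n) : Pplus n ∈ n.primeFactors := by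
  obtain ⟨q, hq, hsup⟩ :=
    exists_mem_eq_sup n.primeFactors (Nat.nonempty_primeFactors.mpr (by omega)) id
  rw [Pplus, if_neg (by omega), hsup]
  exact hq

/-- The primes `p ≤ x` with `p ^ c ≤ P⁺(p - 1) < x ^ c`, those which `T c x` counts and `T' c x`
does not. -/
noncomputable def transitionPrimes (c x : ℝ) : Finset ℕ :=
  {p ∈ Nat.primesLE ⌊x⌋₊ | (p : ℝ) ^ c ≤ Pplus (p - 1) ∧ (Pplus (p - 1) : ℝ) < x ^ c}

theorem T_eq_T'_add_card_transitionPrimes {c x : ℝ} (hc : 0 ≤ c) (hx : 0 ≤ x) :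
    T c x = T' c x + #(transitionPrimes c x) := by
  have hdisj : Disjoint {p ∈ range (⌊x⌋₊ + 1) | p.Prime ∧ x ^ c ≤ (Pplus (p - 1) : ℝ)}
      (transitionPrimes c x) :=
    disjoint_left.mpr fun p hp hpt ↦ (mem_filter.mp hpt).2.2.not_ge (mem_filter.mp hp).2.2
  rw [T, T', ← card_union_of_disjoint hdisj]
  congr 1
  ext p
  have hmono (hp : p ≤ ⌊x⌋₊) : (p : ℝ) ^ c ≤ x ^ c :=
    rpow_le_rpow p.cast_nonneg ((Nat.le_floor_iff hx).mp hp) hc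
  simp only [transitionPrimes, mem_union, mem_filter, mem_range, Nat.lt_succ_iff, Nat.mem_primesLE]
  grind

theorem transitionPrimes_subset {c x y : ℝ} (hc : 0 < c) (hy : 0 ≤ y) :
    transitionPrimes c x ⊆ Nat.primesLE ⌊y⌋₊ ∪
      {q ∈ Ioc ⌊y ^ c⌋₊ ⌊x ^ c⌋₊ | q.Prime}.biUnion
        fun q ↦ {p ∈ Ioc ⌊y⌋₊ ⌊x⌋₊ | p.Prime ∧ p ≡ 1 [MOD q]} := by
  intro p hp
  obtain ⟨hpx, hpc, hxc⟩ := mem_filter.mp hp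
  obtain ⟨hpx, hpp⟩ := Nat.mem_primesLE.mp hpx
  rw [mem_union, or_iff_not_imp_left, Nat.mem_primesLE]
  intro hpy
  have hyp : ⌊y⌋₊ < p := by
    by_contra h
    exact hpy ⟨not_lt.mp h, hpp⟩
  have hp2 : p ≠ 2 := by
    rintro rfl
    have : (1 : ℝ) < 2 ^ c := one_lt_rpow one_lt_two hc
    norm_num [Pplus] at hpc
    linarith
  have hp3 : 2 ≤ p - 1 := by
    have := hpp.two_le
    omega
  set q := Pplus (p - 1)
  have hq : q ∈ (p - 1).primeFactors := Pplus_mem_primeFactors hp3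
  have hyq : y ^ c < q :=
    (rpow_lt_rpow hy ((Nat.floor_lt hy).mp hyp) hc).trans_le hpc
  have hpq : p ≡ 1 [MOD q] :=
    ((Nat.modEq_iff_dvd' hpp.one_le).mpr (Nat.dvd_of_mem_primeFactors hq)).symm
  refine mem_biUnion.mpr ⟨q, mem_filter.mpr ⟨mem_Ioc.mpr ⟨?_, Nat.le_floor hxc.le⟩,
    Nat.prime_of_mem_primeFactors hq⟩, mem_filter.mpr ⟨mem_Ioc.mpr ⟨hyp, hpx⟩, hpp, hpq⟩⟩
  exact (Nat.floor_lt (rpow_nonneg hy c)).mpr hyq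

variable {c δ x y : ℝ}

theorem card_primes_Ioc_modEq_one_le (hδ : 0 < δ) (hδ₁ : δ ≤ 1) (hy : 1 < y)
    (hyx : y ≤ x) {q : ℕ} (hq : q.Prime) (hyq : y ^ δ < q) :
    (#{p ∈ Ioc ⌊y⌋₊ ⌊x⌋₊ | p.Prime ∧ p ≡ 1 [MOD q]} : ℝ) ≤
      2 * x / (δ * log y) * (q : ℝ)⁻¹ + y ^ (2 * δ) := by
  have hy0 : 0 < y := zero_lt_one.trans hy
  have hx0 : 0 < x := hy0.trans_le hyx
  have hlogy : 0 < log y := log_pos hy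
  set R := ⌊y ^ δ⌋₊
  have hRy : (R : ℝ) ≤ y ^ δ := Nat.floor_le (by positivity)
  have hR : 1 ≤ R := Nat.le_floor (by simpa using one_le_rpow hy.le hδ.le)
  have hRq : R < q := by exact_mod_cast hRy.trans_lt hyq
  have hRa : R ≤ ⌊y⌋₊ :=
    Nat.floor_mono (by simpa using rpow_le_rpow_of_exponent_le hy.le hδ₁)
  have hlogR : δ * log y ≤ log (R + 1) := by
    rw [← log_rpow hy0]
    exact log_le_log (by positivity) (Nat.lt_floor_add_one _).le
  have hlen : (⌊x⌋₊ : ℝ) - ⌊y⌋₊ ≤ x :=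
    (sub_le_self _ (Nat.cast_nonneg _)).trans (Nat.floor_le hx0.le)
  have hq0 : (0 : ℝ) < q := Nat.cast_pos.mpr hq.pos
  calc (#{p ∈ Ioc ⌊y⌋₊ ⌊x⌋₊ | p.Prime ∧ p ≡ 1 [MOD q]} : ℝ)
      ≤ 2 * (⌊x⌋₊ - ⌊y⌋₊) / (q * log (R + 1)) + (R : ℝ) ^ 2 :=
        card_primes_Ioc_modEq_le (Nat.floor_mono hyx) hq.pos
          (coprime_primorial_of_lt hq hRq) hR hRa 1
    _ ≤ 2 * x / (q * (δ * log y)) + (y ^ δ) ^ 2 := by gcongr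
    _ = 2 * x / (δ * log y) * (q : ℝ)⁻¹ + y ^ (2 * δ) := by
        rw [← rpow_mul_natCast hy0.le, mul_comm δ, Nat.cast_ofNat]
        field_simp

theorem card_transitionPrimes_le (hc : 0 < c) (hδ : 0 < δ) (hδc : δ ≤ c) (hδ₁ : δ ≤ 1)
    (hy : 1 < y) (hyx : y ≤ x) :
    (#(transitionPrimes c x) : ℝ) ≤ Nat.primeCounting ⌊y⌋₊ +
      8 / (c * δ) * (x * log (2 * (x / y) ^ c) / log y ^ 2) + x ^ c * y ^ (2 * δ) := by
  have hy0 : 0 < y := zero_lt_one.trans hy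
  have hx0 : 0 < x := hy0.trans_le hyx
  have hlogy : 0 < log y := log_pos hy
  set Q : Finset ℕ := {q ∈ Ioc ⌊y ^ c⌋₊ ⌊x ^ c⌋₊ | q.Prime}
  have hunion : #(transitionPrimes c x) ≤ Nat.primeCounting ⌊y⌋₊ +
      ∑ q ∈ Q, #{p ∈ Ioc ⌊y⌋₊ ⌊x⌋₊ | p.Prime ∧ p ≡ 1 [MOD q]} := by
    rw [← Nat.primesLE_card_eq_primeCounting]
    exact (card_le_card (transitionPrimes_subset hc hy0.le)).trans
      ((card_union_le _ _).trans (Nat.add_le_add_left card_biUnion_le _))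
  have hsum : ∑ q ∈ Q, (#{p ∈ Ioc ⌊y⌋₊ ⌊x⌋₊ | p.Prime ∧ p ≡ 1 [MOD q]} : ℝ) ≤
      2 * x / (δ * log y) * ∑ q ∈ Q, (q : ℝ)⁻¹ + #Q * y ^ (2 * δ) := by
    rw [mul_sum, ← nsmul_eq_mul, ← sum_const, ← sum_add_distrib]
    refine sum_le_sum fun q hq ↦ ?_
    obtain ⟨hyq, hqp⟩ := mem_filter.mp hq
    have hyq := (Nat.floor_lt (by positivity)).mp (mem_Ioc.mp hyq).1
    exact card_primes_Ioc_modEq_one_le hδ hδ₁ hy hyx hqp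
      ((rpow_le_rpow_of_exponent_le hy.le hδc).trans_lt hyq)
  have hinv : ∑ q ∈ Q, (q : ℝ)⁻¹ ≤ 4 * log (2 * (x / y) ^ c) / (c * log y) := by
    have h := sum_inv_primes_Ioc_le (one_lt_rpow hy hc) (rpow_le_rpow hy0.le hyx hc.le)
    rwa [log_rpow hy0, mul_div_assoc 2, ← div_rpow hx0.le hy0.le] at h
  have hcardQ : (#Q : ℝ) ≤ x ^ c := by
    have hle : #Q ≤ ⌊x ^ c⌋₊ := (card_filter_le _ _).trans (by simp)
    exact (Nat.cast_le.mpr hle).trans (Nat.floor_le (by positivity))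
  calc (#(transitionPrimes c x) : ℝ)
      ≤ Nat.primeCounting ⌊y⌋₊ +
          ∑ q ∈ Q, (#{p ∈ Ioc ⌊y⌋₊ ⌊x⌋₊ | p.Prime ∧ p ≡ 1 [MOD q]} : ℝ) := by
        exact_mod_cast hunion
    _ ≤ Nat.primeCounting ⌊y⌋₊ + (2 * x / (δ * log y) *
          (4 * log (2 * (x / y) ^ c) / (c * log y)) + x ^ c * y ^ (2 * δ)) := by
        grw [hsum, hinv, hcardQ]
    _ = _ := by
        field_simp
        ring

end TransitionPrimes

section Asymptotics

open Filter Asymptotics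

theorem isEquivalent_log_div_log : (fun x ↦ log (x / log x)) ~[atTop] log := by
  have hloglog : (fun x ↦ log (log x)) =o[atTop] log :=
    isLittleO_log_id_atTop.comp_tendsto tendsto_log_atTop
  refine (IsEquivalent.refl.sub_isLittleO hloglog).congr_left ?_
  filter_upwards [eventually_gt_atTop 1] with x hx
  exact (log_div (by positivity) (log_pos hx).ne').symm

theorem tendsto_div_log_atTop : Tendsto (fun x : ℝ ↦ x / log x) atTop atTop := by
  refine tendsto_exp_atTop.comp
    (isEquivalent_log_div_log.symm.tendsto_atTop tendsto_log_atTop) |>.congr' ?_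
  filter_upwards [eventually_gt_atTop 1] with x hx
  have := log_pos hx
  exact exp_log (by positivity)

theorem primeCounting_div_log_isBigO :
    (fun x ↦ (Nat.primeCounting ⌊x / log x⌋₊ : ℝ)) =O[atTop] fun x ↦ x / log x ^ 2 := by
  have hCheb : (fun y : ℝ ↦ (Nat.primeCounting ⌊y⌋₊ : ℝ)) =O[atTop] fun y ↦ y / log y := by
    refine .of_bound (log 4 + 1) ?_
    filter_upwards [Chebyshev.eventually_primeCounting_le one_pos, eventually_ge_atTop 1]
      with y hy hy1
    have := log_nonneg hy1
    rw [norm_of_nonneg (Nat.cast_nonneg _), norm_of_nonneg (by positivity), ← mul_div_assoc]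
    exact hy
  calc (fun x ↦ (Nat.primeCounting ⌊x / log x⌋₊ : ℝ))
      =O[atTop] fun x ↦ x / log x / log (x / log x) := hCheb.comp_tendsto tendsto_div_log_atTop
    _ =O[atTop] fun x ↦ x / log x / log x :=
        (IsEquivalent.refl.div isEquivalent_log_div_log).isBigO
    _ = fun x ↦ x / log x ^ 2 := by
        ext x
        rw [div_div, sq]

theorem mul_log_two_mul_rpow_div_sq_isBigO (c : ℝ) :
    (fun x ↦ x * log (2 * (x / (x / log x)) ^ c) / log (x / log x) ^ 2) =O[atTop]
      fun x ↦ x * log (log x) / log x ^ 2 := by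
  have hnum : (fun x ↦ log (2 * (x / (x / log x)) ^ c)) =O[atTop] fun x ↦ log (log x) := by
    have hsum : (fun x ↦ log 2 + c * log (log x)) =O[atTop] fun x ↦ log (log x) :=
      (isLittleO_const_log_atTop.comp_tendsto tendsto_log_atTop).isBigO.add
        (isBigO_const_mul_self c _ _)
    refine hsum.congr' ?_ .rfl
    filter_upwards [eventually_gt_atTop 1] with x hx
    have hlog := log_pos hx
    rw [div_div_cancel₀ (by positivity), log_mul two_ne_zero (by positivity), log_rpow hlog]
  have hden := (isEquivalent_log_div_log.pow 2).inv.isBigO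
  exact ((isBigO_refl (fun x ↦ x) atTop).mul hnum).mul hden

theorem rpow_mul_div_log_rpow_isBigO {a b : ℝ} (hb : 0 ≤ b) (hab : a + b < 1) :
    (fun x ↦ x ^ a * (x / log x) ^ b) =O[atTop] fun x ↦ x / log x ^ 2 := by
  have hpow : (fun x ↦ x ^ a * (x / log x) ^ b) =O[atTop] fun x ↦ x ^ (a + b) := by
    refine .of_norm_eventuallyLE ?_
    filter_upwards [eventually_ge_atTop (exp 1)] with x hx
    have hx0 : 0 < x := (exp_pos 1).trans_le hx
    have hlog : 1 ≤ log x := (le_log_iff_exp_le hx0).mpr hx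
    rw [norm_of_nonneg (by positivity), rpow_add hx0]
    gcongr
    exact div_le_self hx0.le hlog
  have hlog : (fun x ↦ log x ^ 2) =O[atTop] fun x ↦ x ^ (1 - (a + b)) := by
    simpa only [rpow_two] using
      (isLittleO_log_rpow_rpow_atTop (s := 1 - (a + b)) 2 (by linarith)).isBigO
  have hinv : (fun x ↦ (x ^ (1 - (a + b)))⁻¹) =O[atTop] fun x ↦ (log x ^ 2)⁻¹ := by
    refine hlog.inv_rev ?_
    filter_upwards [eventually_gt_atTop 1] with x hx hzero
    exact absurd hzero (pow_pos (log_pos hx) 2).ne'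
  refine hpow.trans (((isBigO_refl (fun x ↦ x) atTop).mul hinv).congr' ?_ .rfl)
  filter_upwards [eventually_gt_atTop 0] with x hx
  rw [rpow_sub hx, rpow_one]
  field_simp

theorem T_sub_T'_isBigO {c : ℝ} (hc : 0 < c) (hc₁ : c < 1) :
    (fun x ↦ (T c x - T' c x : ℝ)) =O[atTop] fun x ↦ x * log (log x) / log x ^ 2 := by
  set δ := c * (1 - c) / 2 with hδ_def
  have hδ : 0 < δ := by
    have := sub_pos.mpr hc₁
    positivity
  have hexp : c + 2 * δ < 1 := by nlinarith
  have hloglog : (fun x ↦ x / log x ^ 2) =O[atTop] fun x ↦ x * log (log x) / log x ^ 2 := by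
    simpa only [mul_one, mul_div_right_comm] using
      (isBigO_refl (fun x ↦ x / log x ^ 2) atTop).mul one_isLittleO_log_log.isBigO
  have hbound := ((primeCounting_div_log_isBigO.trans hloglog).add
    ((mul_log_two_mul_rpow_div_sq_isBigO c).const_mul_left (8 / (c * δ)))).add
    ((rpow_mul_div_log_rpow_isBigO (by positivity) hexp).trans hloglog)
  refine .trans (.of_norm_eventuallyLE ?_) hbound
  filter_upwards [tendsto_div_log_atTop.eventually_gt_atTop 1, eventually_ge_atTop (exp 1)]
    with x hy hx
  have hx0 : 0 < x := (exp_pos 1).trans_le hx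
  have hlog : 1 ≤ log x := (le_log_iff_exp_le hx0).mpr hx
  rw [T_eq_T'_add_card_transitionPrimes hc.le hx0.le, Nat.cast_add, add_sub_cancel_left,
    norm_of_nonneg (Nat.cast_nonneg _)]
  exact card_transitionPrimes_le hc hδ (by nlinarith) (by nlinarith) hy (div_le_self hx0.le hlog)

end Asymptotics

/-- For fixed `0 < c < 1`, `T_c(x) = T'_c(x) + O(x log log x / (log x)^2)`. -/
theorem T_sub_T'_bigO (c : ℝ) (hc1 : 0 < c) (hc2 : c < 1) :
    ∃ C : ℝ, 0 < C ∧ ∃ x₀ : ℝ, ∀ x ≥ x₀,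
      |(T c x : ℝ) - (T' c x : ℝ)| ≤
        C * x * Real.log (Real.log x) / (Real.log x) ^ 2 := by
  obtain ⟨C, hC, hbound⟩ := (T_sub_T'_isBigO hc1 hc2).exists_pos
  refine ⟨C, hC, Filter.eventually_atTop.mp ?_⟩
  filter_upwards [hbound.bound, Filter.eventually_ge_atTop (exp 1)] with x hx hxe
  have hx0 : 0 < x := (exp_pos 1).trans_le hxe
  have hloglog : 0 ≤ log (log x) := log_nonneg ((le_log_iff_exp_le hx0).mpr hxe)
  rwa [norm_eq_abs, norm_of_nonneg (by positivity), ← mul_div_assoc, ← mul_assoc] at hx
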